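/- For every even k ≥ 4 and every n, the online Ramsey number satisfies r̃(C_k, P_n) ≤ 2n + 11k. -/

import Mathlib

open SimpleGraph

/-- A board state: the set of red edges and the set of blue edges. -/
abbrev Board : Type := Set (Sym2 ℕ) × Set (Sym2 ℕ)

/-- The set of already colored edges of a board. -/
def Board.colored (B : Board) : Set (Sym2 ℕ) := B.1 ∪ B.2

/-- A Builder strategy selects an edge given the current board. -/
abbrev BuilderStrat : Type := Board → Sym2 ℕ

/-- A Painter strategy colors the selected edge (true = red, false = blue). -/
abbrev PainterStrat : Type := Board → Sym2 ℕ → Bool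

/-- The board after `t` rounds of play from `init`. -/
def playGame (b : BuilderStrat) (p : PainterStrat) (init : Board) : ℕ → Board
  | 0 => init
  | t + 1 =>
      let B := playGame b p init t
      let e := b B
      if p B e then (insert e B.1, B.2) else (B.1, insert e B.2)

/-- Builder's strategy is valid from `init`: along any play it always selects a
previously unselected non-loop edge. -/
def ValidFrom (b : BuilderStrat) (init : Board) : Prop :=
  ∀ p : PainterStrat, ∀ t : ℕ,
    ¬ (b (playGame b p init t)).IsDiag ∧
      b (playGame b p init t) ∉ (playGame b p init t).colored

/-- Builder can force the winning condition `W` within `t` rounds, starting from `init`. -/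
def BuilderWinsIn (init : Board) (W : Board → Prop) (t : ℕ) : Prop :=
  ∃ b : BuilderStrat, ValidFrom b init ∧
    ∀ p : PainterStrat, ∃ s, s ≤ t ∧ W (playGame b p init s)

/-- `G` contains a copy of `H`. -/
def HasCopy {α β : Type} (H : SimpleGraph α) (G : SimpleGraph β) : Prop :=
  ∃ f : α ↪ β, ∀ x y, H.Adj x y → G.Adj (f x) (f y)

/-- The red part of the board contains a copy of `H`. -/
def RedCopy {α : Type} (H : SimpleGraph α) (B : Board) : Prop :=
  HasCopy H (fromEdgeSet B.1)

/-- The blue part of the board contains a copy of `H`. -/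
def BlueCopy {α : Type} (H : SimpleGraph α) (B : Board) : Prop :=
  HasCopy H (fromEdgeSet B.2)

/-- The empty board. -/
def emptyBoard : Board := (∅, ∅)

/-- Winning condition: a red `C_k` or a blue `C_n`. -/
def WinCC (k n : ℕ) (B : Board) : Prop :=
  RedCopy (cycleGraph k) B ∨ BlueCopy (cycleGraph n) B

/-- Winning condition: a red `C_k` or a blue path on `n` vertices. -/
def WinCP (k n : ℕ) (B : Board) : Prop :=
  RedCopy (cycleGraph k) B ∨ BlueCopy (pathGraph n) B

/-- A board consisting of a single blue cycle on the vertices `0, …, m-1`. -/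
def blueCycleBoard (m : ℕ) : Board :=
  (∅, {e | ∃ i : ℕ, i < m ∧ e = s(i, (i + 1) % m)})

/-- A board consisting of a single blue path on the vertices `0, …, m-1`. -/
def bluePathBoard (m : ℕ) : Board :=
  (∅, {e | ∃ i : ℕ, i + 1 < m ∧ e = s(i, i + 1)})

/-!
Builder first grows a comb: disjoint blue paths, the teeth, start at the vertices of a red path on
fewer than `k` vertices, and one further blue path is free. Builder joins the end `x` of the free
path to the first vertex `q` of the red path. If the edge is red, the free path becomes a tooth and
a new vertex becomes the free path; if it is blue, the free path absorbs the tooth at `q`. A new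
vertex thus costs two rounds, one for forming a tooth and one for absorbing it. When the red path
has `k - 1` vertices and `xq` is red, the edge from `x` to the last vertex of the red path must be
blue, and the red path moves on by one vertex.

After about `2n + 4k` rounds there are `n + 2k - 3` vertices, spread over at most `k` blue paths.
Builder now merges these through the red path. Once the red path has `k - 1` vertices, Painter
cannot color both edges from another vertex to its ends red, so five rounds suffice to join two out
of any three blue paths at the same end. The last two blue paths are joined by a zigzag of `k` edges
between them: if all answers are red, it is a red cycle, and the first blue answer yields a blue
path on all but a few of the vertices.
-/

namespace Board

/-- The graph of red edges. -/
def red (B : Board) : SimpleGraph ℕ := fromEdgeSet B.1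

/-- The graph of blue edges. -/
def blue (B : Board) : SimpleGraph ℕ := fromEdgeSet B.2

/-- The board obtained by coloring `e` red. -/
def addRed (B : Board) (e : Sym2 ℕ) : Board := (insert e B.1, B.2)

/-- The board obtained by coloring `e` blue. -/
def addBlue (B : Board) (e : Sym2 ℕ) : Board := (B.1, insert e B.2)

variable {B : Board}

lemma le_addRed (B : Board) (e : Sym2 ℕ) : B ≤ B.addRed e := ⟨Set.subset_insert _ _, le_rfl⟩

lemma le_addBlue (B : Board) (e : Sym2 ℕ) : B ≤ B.addBlue e := ⟨le_rfl, Set.subset_insert _ _⟩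

lemma finite_colored_addRed (hB : B.colored.Finite) (e : Sym2 ℕ) :
    (B.addRed e).colored.Finite := by
  simpa only [colored, addRed, Set.insert_union] using hB.insert e

lemma finite_colored_addBlue (hB : B.colored.Finite) (e : Sym2 ℕ) :
    (B.addBlue e).colored.Finite := by
  simpa only [colored, addBlue, Set.union_insert] using hB.insert e

lemma exists_notMem_colored (hB : B.colored.Finite) : ∃ e : Sym2 ℕ, ¬ e.IsDiag ∧ e ∉ B.colored := by
  have hinj : Function.Injective fun i : ℕ => s(0, i + 1) := fun i j h => by simpa using h
  obtain ⟨_, ⟨i, rfl⟩, h⟩ := (Set.infinite_range_of_injective hinj).exists_notMem_finite hB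
  exact ⟨_, by simp, h⟩

end Board

/-- Builder can force `W` from the board `B` within `t` further rounds, whatever colors Painter
chooses; unlike in `BuilderWinsIn`, her moves may depend on the remaining number of rounds. -/
def Forces (W : Board → Prop) : ℕ → Board → Prop
  | 0, B => W B
  | t + 1, B => W B ∨ ∃ e, ¬ e.IsDiag ∧ e ∉ B.colored ∧
      Forces W t (B.addRed e) ∧ Forces W t (B.addBlue e)

/-- A legal edge which does not waste a round: if `t + 1` rounds suffice to force `W` but `t`
do not, then `t` rounds suffice after this move. -/
structure OptimalMove (W : Board → Prop) (B : Board) (e : Sym2 ℕ) : Prop where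
  not_isDiag : ¬ e.IsDiag
  notMem_colored : e ∉ B.colored
  forces : ∀ t, Forces W (t + 1) B → ¬ Forces W t B →
    Forces W t (B.addRed e) ∧ Forces W t (B.addBlue e)

/-- The memoryless strategy of playing an optimal move. -/
noncomputable def optimalStrat (W : Board → Prop) : BuilderStrat := fun B =>
  Classical.epsilon (OptimalMove W B)

namespace Forces

variable {W : Board → Prop} {B : Board} {s t x y : ℕ}

lemma of_win (h : W B) : Forces W t B := by
  cases t with
  | zero => exact h
  | succ t => exact Or.inl h

lemma succ (h : Forces W t B) : Forces W (t + 1) B := by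
  induction t generalizing B with
  | zero => exact Or.inl h
  | succ t ih => exact h.imp id fun ⟨e, hdiag, hcol, hr, hb⟩ => ⟨e, hdiag, hcol, ih hr, ih hb⟩

lemma mono (h : Forces W s B) (hst : s ≤ t) : Forces W t B :=
  Nat.le_induction h (fun _ _ => succ) t hst

-- Asking for an edge that is already colored is not a legal move, but then no round is needed.
lemma ask (hxy : x ≠ y) (hr : ∀ B' ≥ B, B'.red.Adj x y → Forces W t B')
    (hb : ∀ B' ≥ B, B'.blue.Adj x y → Forces W t B') : Forces W (t + 1) B := by
  by_cases hcol : s(x, y) ∈ B.colored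
  · exact hcol.elim (fun h => (hr B le_rfl ((fromEdgeSet_adj _).2 ⟨h, hxy⟩)).succ)
      (fun h => (hb B le_rfl ((fromEdgeSet_adj _).2 ⟨h, hxy⟩)).succ)
  · exact Or.inr ⟨s(x, y), by simpa using hxy, hcol,
      hr _ (B.le_addRed _) ((fromEdgeSet_adj _).2 ⟨Set.mem_insert _ _, hxy⟩),
      hb _ (B.le_addBlue _) ((fromEdgeSet_adj _).2 ⟨Set.mem_insert _ _, hxy⟩)⟩

end Forces

section Strategy

variable {W : Board → Prop} {B : Board} {t : ℕ}

lemma exists_optimalMove (W : Board → Prop) (hB : B.colored.Finite) :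
    ∃ e, OptimalMove W B e := by
  by_cases h : ∃ t, Forces W (t + 1) B ∧ ¬ Forces W t B
  · obtain ⟨t, hwin | ⟨e, hdiag, hcol, hr, hb⟩, hmin⟩ := h
    · exact absurd (Forces.of_win hwin) hmin
    · refine ⟨e, hdiag, hcol, fun s hs _ => ?_⟩
      have hts : t ≤ s := by
        by_contra! hst
        exact hmin (hs.mono hst)
      exact ⟨hr.mono hts, hb.mono hts⟩
  · obtain ⟨e, hdiag, hcol⟩ := Board.exists_notMem_colored hB
    exact ⟨e, hdiag, hcol, fun t ht hnt => absurd ⟨t, ht, hnt⟩ h⟩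

lemma optimalMove_optimalStrat (W : Board → Prop) (hB : B.colored.Finite) :
    OptimalMove W B (optimalStrat W B) :=
  Classical.epsilon_spec (exists_optimalMove W hB)

lemma playGame_succ (b : BuilderStrat) (p : PainterStrat) (B : Board) (t : ℕ) :
    playGame b p B (t + 1) = playGame b p (playGame b p B 1) t := by
  induction t with
  | zero => rfl
  | succ t ih => rw [playGame, ih, ← playGame.eq_2]

lemma playGame_one (b : BuilderStrat) (p : PainterStrat) (B : Board) :
    playGame b p B 1 = B.addRed (b B) ∨ playGame b p B 1 = B.addBlue (b B) :=
  ite_eq_or_eq _ _ _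

lemma finite_colored_playGame (b : BuilderStrat) (p : PainterStrat) (hB : B.colored.Finite)
    (t : ℕ) : (playGame b p B t).colored.Finite := by
  induction t generalizing B with
  | zero => exact hB
  | succ t ih =>
    rw [playGame_succ]
    refine ih ?_
    rcases playGame_one b p B with h | h <;> rw [h]
    · exact Board.finite_colored_addRed hB _
    · exact Board.finite_colored_addBlue hB _

lemma Forces.exists_playGame_optimalStrat (h : Forces W t B) (hB : B.colored.Finite)
    (p : PainterStrat) : ∃ s ≤ t, W (playGame (optimalStrat W) p B s) := by
  induction t generalizing B with
  | zero => exact ⟨0, le_rfl, h⟩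
  | succ t ih =>
    by_cases ht : Forces W t B
    · obtain ⟨s, hs, hwin⟩ := ih ht hB
      exact ⟨s, hs.trans t.le_succ, hwin⟩
    · have hopt := (optimalMove_optimalStrat W hB).forces t h ht
      have hnext : Forces W t (playGame (optimalStrat W) p B 1) := by
        rcases playGame_one (optimalStrat W) p B with h | h <;> rw [h]
        exacts [hopt.1, hopt.2]
      obtain ⟨s, hs, hwin⟩ := ih hnext (finite_colored_playGame _ p hB 1)
      exact ⟨s + 1, Nat.succ_le_succ hs, by rwa [playGame_succ]⟩

theorem Forces.builderWinsIn (h : Forces W t B) (hB : B.colored.Finite) :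
    BuilderWinsIn B W t :=
  ⟨optimalStrat W,
    fun p s =>
      have hopt := optimalMove_optimalStrat W (finite_colored_playGame _ p hB s)
      ⟨hopt.not_isDiag, hopt.notMem_colored⟩,
    h.exists_playGame_optimalStrat hB⟩

end Strategy

section Copy

variable {α β : Type} {H : SimpleGraph α} {G G' : SimpleGraph β} {l l' : List β} {x y z : β}

lemma hasCopy_of_isContained (h : H ⊑ G) : HasCopy H G :=
  h.elim fun f => ⟨f.toEmbedding, fun _ _ => f.toHom.map_adj⟩

lemma hasCopy_pathGraph {n : ℕ} (h : l.IsChain G.Adj) (hl : l.Nodup) (hn : n ≤ l.length) :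
    HasCopy (pathGraph n) G := by
  have hinj : Function.Injective fun i : Fin n => l[i.1] := fun i j hij =>
    Fin.ext (hl.getElem_inj_iff.1 hij)
  refine ⟨⟨_, hinj⟩, fun i j hij => ?_⟩
  simp only [Function.Embedding.coeFn_mk]
  rcases pathGraph_adj.1 hij with hij | hij
  · simpa only [← hij] using h.getElem i (by omega)
  · simpa only [← hij] using (h.getElem j (by omega)).symm

lemma hasCopy_cycleGraph {k : ℕ} (h : (x :: (l ++ [z])).IsChain G.Adj)
    (hl : (x :: (l ++ [z])).Nodup) (hzx : G.Adj z x) (hk : l.length + 2 = k) (hk2 : 2 < k) :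
    HasCopy (cycleGraph k) G := by
  refine hasCopy_of_isContained ((cycleGraph_isContained_iff hk2).2 ?_)
  obtain ⟨p, hp⟩ : ∃ p : G.Walk x z, p.support = x :: (l ++ [z]) :=
    ⟨(Walk.ofSupport _ (List.cons_ne_nil _ _) h).copy List.head_cons (by grind), by
      rw [Walk.support_copy, Walk.support_ofSupport]⟩
  have hlen : (Walk.cons hzx p).length = k := by
    have := p.length_support
    grind [Walk.length_cons]
  have hpath : p.IsPath := Walk.IsPath.mk' (hp ▸ hl)
  exact ⟨z, .cons hzx p,
    Walk.isCycle_iff_isPath_tail_and_le_length.2 ⟨by simpa using hpath, by omega⟩, hlen⟩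

lemma isChain_adj_mono (hG : G ≤ G') (h : l.IsChain G.Adj) : l.IsChain G'.Adj :=
  h.imp fun _ _ hxy => hG hxy

lemma isChain_adj_reverse_append (h : (x :: l).IsChain G.Adj) (h' : (y :: l').IsChain G.Adj)
    (hxy : G.Adj x y) : ((x :: l).reverse ++ y :: l').IsChain G.Adj := by
  refine List.isChain_append.2 ⟨?_, h', by simpa using hxy⟩
  exact List.isChain_reverse.2 (h.imp fun _ _ => Adj.symm)

end Copy

namespace Board

variable {B B' : Board} {l : List ℕ}

lemma red_mono (hB : B ≤ B') : B.red ≤ B'.red := fromEdgeSet_mono hB.1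

lemma blue_mono (hB : B ≤ B') : B.blue ≤ B'.blue := fromEdgeSet_mono hB.2

lemma isChain_red_mono (hB : B ≤ B') (h : l.IsChain B.red.Adj) : l.IsChain B'.red.Adj :=
  isChain_adj_mono (red_mono hB) h

lemma isChain_blue_mono (hB : B ≤ B') (h : l.IsChain B.blue.Adj) : l.IsChain B'.blue.Adj :=
  isChain_adj_mono (blue_mono hB) h

end Board

section TwoPaths

variable {k n t : ℕ} {B : Board} {l l' P Q R Z : List ℕ} {a c x y z : ℕ}

lemma Forces.of_blue_path (h : l.IsChain B.blue.Adj) (hl : l.Nodup) (hn : n ≤ l.length) :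
    Forces (WinCP k n) t B :=
  of_win (Or.inr (hasCopy_pathGraph h hl hn))

lemma Forces.of_blue_edge (h : (x :: l).IsChain B.blue.Adj) (h' : (y :: l').IsChain B.blue.Adj)
    (hxy : B.blue.Adj x y) (hnd : (x :: l ++ y :: l').Nodup)
    (hn : n ≤ (x :: l).length + (y :: l').length) : Forces (WinCP k n) t B :=
  of_blue_path (isChain_adj_reverse_append h h' hxy)
    ((((x :: l).reverse_perm.append_right _).nodup_iff).2 hnd) (by grind)

lemma Forces.of_red_cycle (h : (x :: (l ++ [z])).IsChain B.red.Adj) (hl : (x :: (l ++ [z])).Nodup)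
    (hzx : B.red.Adj z x) (hk : l.length + 2 = k) (hk2 : 2 < k) : Forces (WinCP k n) t B :=
  of_win (Or.inl (hasCopy_cycleGraph h hl hzx hk hk2))

-- Builder zigzags between the two blue paths, so that red answers grow the red path from `a` to `c`
-- by two vertices every two rounds. The first blue answer joins the two blue paths, and they lose
-- no vertices other than those of the zigzag.
lemma forces_of_zigzag (hk : 2 < k) (hP : (a :: P).IsChain B.blue.Adj)
    (hQ : (Q ++ c :: R).IsChain B.blue.Adj) (hZ : (a :: (Z ++ [c])).IsChain B.red.Adj)
    (hnd : (a :: P ++ (Q ++ c :: R) ++ Z).Nodup) (hZk : Z.length + 2 * Q.length + 2 = k)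
    (hlen : n + 2 * Q.length ≤ (a :: P).length + (Q ++ c :: R).length) :
    Forces (WinCP k n) (2 * Q.length + 1) B := by
  induction Q generalizing B a P Z with
  | nil =>
    refine .ask (x := a) (y := c) (by grind) (fun B' hB hac => ?_) (fun B' hB hac => ?_)
    · exact .of_red_cycle (Board.isChain_red_mono hB hZ) (by grind) hac.symm hZk hk
    · exact .of_blue_edge (Board.isChain_blue_mono hB hP) (Board.isChain_blue_mono hB hQ) hac
        (by grind) (by grind)
  | cons y Q ih =>
    have hyQ : (y :: (Q ++ c :: R)).IsChain B.blue.Adj := hQ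
    refine .ask (x := a) (y := y) (by grind) (fun B₁ hB₁ hay => ?_) (fun B' hB hay => ?_)
    · rcases P with _ | ⟨b, P⟩
      · exact .of_blue_path (Board.isChain_blue_mono hB₁ hyQ) (by grind) (by grind)
      refine .ask (x := y) (y := b) (by grind) (fun B₂ hB₂ hyb => ?_) (fun B₂ hB₂ hyb => ?_)
      · have hB := hB₁.trans hB₂
        have hyZ : (y :: a :: (Z ++ [c])).IsChain B₁.red.Adj :=
          (Board.isChain_red_mono hB₁ hZ).cons_cons hay.symm
        refine ih (Z := y :: a :: Z) (Board.isChain_blue_mono hB hP).tail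
          (Board.isChain_blue_mono hB hyQ).tail
          ((Board.isChain_red_mono hB₂ hyZ).cons_cons hyb.symm) ?_ (by grind) (by grind)
        exact (List.Perm.nodup_iff (by grind)).1 hnd
      · have hB := hB₁.trans hB₂
        exact .of_blue_edge (Board.isChain_blue_mono hB hyQ) (Board.isChain_blue_mono hB hP).tail
          hyb (by grind) (by grind)
    · exact .of_blue_edge (Board.isChain_blue_mono hB hP) (Board.isChain_blue_mono hB hyQ) hay
        (by grind) (by grind)

lemma forces_of_two_blue_paths (hk : 2 < k) (hke : Even k)
    (hP : P.IsChain B.blue.Adj) (hQ : Q.IsChain B.blue.Adj) (hnd : (P ++ Q).Nodup)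
    (hlen : n + k ≤ P.length + Q.length + 2) : Forces (WinCP k n) k B := by
  obtain ⟨m, rfl⟩ := hke
  rcases P with _ | ⟨a, P⟩
  · exact .of_blue_path hQ (by grind) (by grind)
  rcases lt_or_ge (m - 1) Q.length with hm | hm
  · obtain ⟨Q, c, R, rfl, hQm⟩ : ∃ Q₁ c R, Q = Q₁ ++ c :: R ∧ Q₁.length = m - 1 :=
      ⟨Q.take (m - 1), Q[m - 1], Q.drop (m - 1 + 1), by simp, by simp; omega⟩
    have hrounds : m + m = 2 * Q.length + 1 + 1 := by omega
    rw [hrounds]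
    refine .ask (x := a) (y := c) (by grind) (fun B' hB hac => ?_) (fun B' hB hac => ?_)
    · exact forces_of_zigzag (Z := []) (by omega) (Board.isChain_blue_mono hB hP)
        (Board.isChain_blue_mono hB hQ) (.cons_cons hac (.singleton c)) (by grind) (by grind)
        (by grind)
    · exact .of_blue_edge (Board.isChain_blue_mono hB hP)
        (Board.isChain_blue_mono hB hQ).right_of_append hac (by grind) (by grind)
  · exact .of_blue_path hP (by grind) (by grind)

end TwoPaths

/-- A partition of the vertices `V` into a red path `Z` and blue paths `Ps`: the positions in which
Builder merges the blue paths, feeding vertices into the red path and reusing its ends as links. -/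
structure PathSystem (B : Board) (V Z : List ℕ) (Ps : List (List ℕ)) : Prop where
  red : Z.IsChain B.red.Adj
  blue : ∀ P ∈ Ps, P.IsChain B.blue.Adj
  perm : (Z ++ Ps.flatten).Perm V
  nodup : V.Nodup

namespace PathSystem

variable {k n T : ℕ} {W : Board → Prop} {B B' : Board} {V Z Z' P Q S : List ℕ}
  {Ps Ps' R : List (List ℕ)} {d e w x y : ℕ}

lemma mono (h : PathSystem B V Z Ps) (hB : B ≤ B') : PathSystem B' V Z Ps :=
  ⟨Board.isChain_red_mono hB h.red, fun P hP => Board.isChain_blue_mono hB (h.blue P hP),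
    h.perm, h.nodup⟩

lemma reorder (h : PathSystem B V Z Ps) (hPs : Ps'.Perm Ps) : PathSystem B V Z Ps' :=
  ⟨h.red, fun P hP => h.blue P (hPs.subset hP), (hPs.flatten.append_left Z).trans h.perm, h.nodup⟩

lemma of_nil_cons (h : PathSystem B V Z ([] :: Ps)) : PathSystem B V Z Ps :=
  ⟨h.red, fun P hP => h.blue P (List.mem_cons_of_mem _ hP), h.perm, h.nodup⟩

lemma nodup_append (h : PathSystem B V Z Ps) : (Z ++ Ps.flatten).Nodup :=
  h.perm.nodup_iff.2 h.nodup

lemma length_eq (h : PathSystem B V Z Ps) : V.length = Z.length + Ps.flatten.length := by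
  rw [← h.perm.length_eq, List.length_append]

lemma extend (h : PathSystem B V Z ((x :: P) :: R)) (hx : ∀ d ∈ Z.head?, B.red.Adj x d) :
    PathSystem B V (x :: Z) (P :: R) where
  red := h.red.cons hx
  blue := List.forall_mem_cons.2
    ⟨(h.blue _ List.mem_cons_self).tail, fun S hS => h.blue S (List.mem_cons_of_mem _ hS)⟩
  perm := by
    have := h.perm
    grind
  nodup := h.nodup

lemma merge (h : PathSystem B V Z ((x :: P) :: (y :: Q) :: R)) (hZ : Z.Perm (d :: Z'))
    (hZ' : Z'.IsChain B.red.Adj) (hx : B.blue.Adj x d) (hy : B.blue.Adj y d) :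
    PathSystem B V Z' (((y :: Q).reverse ++ d :: x :: P) :: R) where
  red := hZ'
  blue := by
    have hblue := h.blue
    simp only [List.forall_mem_cons] at hblue
    obtain ⟨hP, hQ, hR⟩ := hblue
    exact List.forall_mem_cons.2 ⟨isChain_adj_reverse_append hQ (hP.cons_cons hx.symm) hy, hR⟩
  perm := by
    refine List.Perm.trans ?_ h.perm
    grind
  nodup := h.nodup

lemma forces_of_extend_or_merge (h : PathSystem B V (d :: Z) ((x :: P) :: (y :: Q) :: R))
    (hextend : ∀ B' z Ps', PathSystem B' V (z :: d :: Z) Ps' → Ps'.length = R.length + 2 →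
      Forces W T B')
    (hmerge : ∀ B' P', PathSystem B' V Z (P' :: R) → Forces W T B') :
    Forces W (T + 2) B := by
  have hnd := h.nodup_append
  refine .ask (x := x) (y := d) (by grind) (fun B₁ hB₁ hxd => ?_) (fun B₁ hB₁ hxd => ?_)
  · exact (hextend B₁ x _ ((h.mono hB₁).extend (by simpa using hxd)) rfl).succ
  · refine .ask (x := y) (y := d) (by grind) (fun B₂ hB₂ hyd => ?_) (fun B₂ hB₂ hyd => ?_)
    · have h' := (h.mono (hB₁.trans hB₂)).reorder (List.Perm.swap (x :: P) (y :: Q) R)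
      exact hextend B₂ y _ (h'.extend (by simpa using hyd)) rfl
    · have h' := h.mono (hB₁.trans hB₂)
      exact hmerge B₂ _ (h'.merge (.refl _) h'.red.tail (Board.blue_mono hB₂ hxd) hyd)

lemma forces_of_blue_adj_end (h : PathSystem B V (d :: (Z ++ [e])) ((x :: P) :: R))
    (hZ : Z.length + 3 = k) (hd : ∀ B' ≥ B, B'.blue.Adj x d → Forces (WinCP k n) (T + 1) B')
    (he : ∀ B' ≥ B, B'.blue.Adj x e → Forces (WinCP k n) T B') :
    Forces (WinCP k n) (T + 2) B := by
  have hnd := h.nodup_append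
  refine .ask (x := x) (y := d) (by grind) (fun B₁ hB₁ hxd => ?_) hd
  refine .ask (x := x) (y := e) (by grind) (fun B₂ hB₂ hxe => ?_) (fun B₂ hB₂ => ?_)
  · have hred : (x :: (d :: Z ++ [e])).IsChain B₂.red.Adj :=
      Board.isChain_red_mono hB₂ ((h.mono hB₁).red.cons_cons hxd)
    exact .of_red_cycle hred (by grind) hxe.symm (by grind) (by omega)
  · exact he B₂ (hB₁.trans hB₂)

lemma merge_head (h : PathSystem B V (d :: (Z ++ [e])) ((x :: P) :: (y :: Q) :: R))
    (hx : B.blue.Adj x d) (hy : B.blue.Adj y d) :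
    PathSystem B V (Z ++ [e]) (((y :: Q).reverse ++ d :: x :: P) :: R) :=
  h.merge (.refl _) h.red.tail hx hy

lemma merge_last (h : PathSystem B V (d :: (Z ++ [e])) ((x :: P) :: (y :: Q) :: R))
    (hx : B.blue.Adj x e) (hy : B.blue.Adj y e) :
    PathSystem B V (d :: Z) (((y :: Q).reverse ++ e :: x :: P) :: R) :=
  h.merge (List.perm_append_singleton e (d :: Z)) (h.red.left_of_append (l₁ := d :: Z)) hx hy

lemma forces_of_blue_adj_ends
    (h : PathSystem B V (d :: (Z ++ [e])) ((x :: P) :: (y :: Q) :: (w :: S) :: R))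
    (hZ : Z.length + 3 = k) (hxd : B.blue.Adj x d) (hye : B.blue.Adj y e)
    (hmerge : ∀ B' Z' Ps', PathSystem B' V Z' Ps' → Z'.length = Z.length + 1 →
      Ps'.length = R.length + 2 → Forces (WinCP k n) T B') :
    Forces (WinCP k n) (T + 2) B := by
  have h' : PathSystem B V (d :: (Z ++ [e])) ((w :: S) :: (x :: P) :: (y :: Q) :: R) :=
    h.reorder (by grind)
  refine h'.forces_of_blue_adj_end hZ (fun B' hB hwd => ?_) (fun B' hB hwe => ?_)
  · have hmerged := (h'.mono hB).merge_head hwd (Board.blue_mono hB hxd)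
    exact (hmerge B' _ _ hmerged (by simp) (by simp)).succ
  · have hwy := (h'.mono hB).reorder (Ps' := (w :: S) :: (y :: Q) :: (x :: P) :: R) (by grind)
    exact hmerge B' _ _ (hwy.merge_last hwe (Board.blue_mono hB hye)) (by simp) (by simp)

-- Among three blue paths, two get attached to the same end of the red path.
lemma forces_of_merge_at_end
    (h : PathSystem B V (d :: (Z ++ [e])) ((x :: P) :: (y :: Q) :: (w :: S) :: R))
    (hZ : Z.length + 3 = k)
    (hmerge : ∀ B' Z' Ps', PathSystem B' V Z' Ps' → Z'.length = Z.length + 1 →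
      Ps'.length = R.length + 2 → Forces (WinCP k n) T B') :
    Forces (WinCP k n) (T + 5) B := by
  have hyx {B' : Board} (hB : B ≤ B') :
      PathSystem B' V (d :: (Z ++ [e])) ((y :: Q) :: (x :: P) :: (w :: S) :: R) :=
    (h.mono hB).reorder (.swap _ _ _)
  refine h.forces_of_blue_adj_end hZ (fun B₁ hB₁ hxd => ?_) (fun B₁ hB₁ hxe => ?_)
  · refine (hyx hB₁).forces_of_blue_adj_end hZ (fun B₂ hB₂ hyd => ?_) (fun B₂ hB₂ hye => ?_)
    · have hmerged := (hyx (hB₁.trans hB₂)).merge_head hyd (Board.blue_mono hB₂ hxd)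
      exact (hmerge B₂ _ _ hmerged (by simp) (by simp)).mono (by omega)
    · exact (h.mono (hB₁.trans hB₂)).forces_of_blue_adj_ends hZ (Board.blue_mono hB₂ hxd) hye
        hmerge
  · refine (hyx hB₁).forces_of_blue_adj_end hZ (fun B₂ hB₂ hyd => ?_) (fun B₂ hB₂ hye => ?_)
    · exact (hyx (hB₁.trans hB₂)).forces_of_blue_adj_ends hZ hyd (Board.blue_mono hB₂ hxe) hmerge
    · have hmerged := (hyx (hB₁.trans hB₂)).merge_last hye (Board.blue_mono hB₂ hxe)
      exact (hmerge B₂ _ _ hmerged (by simp) (by simp)).succ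

lemma forces_of_length_le_two (h : PathSystem B V Z Ps) (hk : 4 ≤ k) (hke : Even k)
    (hV : n + 2 * k ≤ V.length + 3) (hZ : Z.length < k) (hPs : Ps.length ≤ 2) (hT : k ≤ T) :
    Forces (WinCP k n) T B := by
  obtain ⟨P, Q, hPQ⟩ : ∃ P Q, PathSystem B V Z [P, Q] := by
    match Ps, hPs with
    | [], _ => exact ⟨[], [], h.red, by simp, h.perm, h.nodup⟩
    | [P], _ => exact ⟨[], P, h.red, by simpa using h.blue, h.perm, h.nodup⟩
    | [P, Q], _ => exact ⟨P, Q, h⟩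
  have hlen := hPQ.length_eq
  have hnd := hPQ.nodup_append
  exact (forces_of_two_blue_paths (by omega) hke (hPQ.blue P (by simp)) (hPQ.blue Q (by simp))
    (by grind) (by grind)).mono hT

-- Growing the red path costs at most two rounds per vertex, and merging two blue paths costs at
-- most five rounds and one vertex of the red path.
theorem forces (h : PathSystem B V Z Ps) (hk : 4 ≤ k) (hke : Even k)
    (hV : n + 2 * k ≤ V.length + 3) (hZ : Z.length < k)
    (hT : k ≤ T) (hT' : 3 * k + 7 * Ps.length ≤ T + 2 * Z.length + 16) :
    Forces (WinCP k n) T B := by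
  induction T using Nat.strong_induction_on generalizing B Z Ps with | _ T ih => ?_
  rcases le_or_gt Ps.length 2 with hPs | hPs
  · exact h.forces_of_length_le_two hk hke hV hZ hPs hT
  by_cases hnil : [] ∈ Ps
  · have h' := h.reorder (List.perm_cons_erase hnil).symm
    have hlen := List.length_erase_of_mem hnil
    exact (ih (T - 1) (by omega) h'.of_nil_cons hZ (by omega) (by omega)).mono (T.sub_le 1)
  obtain ⟨x, P, y, Q, w, S, R, rfl⟩ : ∃ x P y Q w S R,
      Ps = (x :: P) :: (y :: Q) :: (w :: S) :: R := by
    rcases Ps with _ | ⟨_ | ⟨x, P⟩, _ | ⟨_ | ⟨y, Q⟩, _ | ⟨_ | ⟨w, S⟩, R⟩⟩⟩ <;> grind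
  simp only [List.length_cons] at hT'
  rcases Z with _ | ⟨d, Z⟩
  · exact (ih (T - 1) (by grind) (h.extend (by simp)) (by grind) (by grind) (by grind)).mono
      (T.sub_le 1)
  simp only [List.length_cons] at hZ hT'
  rcases lt_or_ge (Z.length + 2) k with hfull | hfull
  · obtain ⟨T, rfl⟩ := Nat.exists_eq_add_of_le' (show 2 ≤ T by omega)
    refine h.forces_of_extend_or_merge (fun B' z Ps' h' hPs' => ?_) (fun B' P' h' => ?_)
    all_goals refine ih T (by omega) h' ?_ (by omega) ?_ <;> grind
  · obtain ⟨Z, e, rfl⟩ := List.eq_nil_or_concat' Z |>.resolve_left (by grind)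
    obtain ⟨T, rfl⟩ := Nat.exists_eq_add_of_le' (show 5 ≤ T by omega)
    refine h.forces_of_merge_at_end (by grind) (fun B' Z' Ps' h' hZ' hPs' => ?_)
    refine ih T (by omega) h' ?_ (by omega) ?_ <;> grind

end PathSystem

/-- The vertices of the blue paths `p.1 :: p.2`, for `p` in `Ls`; see `Comb`. -/
def teethVertices (Ls : List (ℕ × List ℕ)) : List ℕ := Ls.flatMap fun p => p.1 :: p.2

@[simp]
lemma teethVertices_nil : teethVertices [] = [] := rfl

@[simp]
lemma teethVertices_cons (p : ℕ × List ℕ) (Ls : List (ℕ × List ℕ)) :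
    teethVertices (p :: Ls) = p.1 :: (p.2 ++ teethVertices Ls) := rfl

@[simp]
lemma teethVertices_append (Ls Ls' : List (ℕ × List ℕ)) :
    teethVertices (Ls ++ Ls') = teethVertices Ls ++ teethVertices Ls' := List.flatMap_append

/-- A comb: the blue paths `p.1 :: p.2`, for `p` in `Ls`, are its teeth, and their first vertices
form a red path on fewer than `k` vertices. It comes with a nonempty blue path `F`, to be attached
next, and all these paths are disjoint. -/
structure Comb (B : Board) (k : ℕ) (Ls : List (ℕ × List ℕ)) (F : List ℕ) : Prop where
  red : (Ls.map Prod.fst).IsChain B.red.Adj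
  teeth : ∀ p ∈ Ls, (p.1 :: p.2).IsChain B.blue.Adj
  free : F.IsChain B.blue.Adj
  nodup : (teethVertices Ls ++ F).Nodup
  free_ne_nil : F ≠ []
  length_lt : Ls.length < k
  length_free : Ls.length + 1 = k → F.length = 1

namespace Comb

variable {k n T : ℕ} {W : Board → Prop} {B B' : Board} {Ls : List (ℕ × List ℕ)}
  {F L L' : List ℕ} {q x z : ℕ}

lemma mono (h : Comb B k Ls F) (hB : B ≤ B') : Comb B' k Ls F where
  __ := h
  red := Board.isChain_red_mono hB h.red
  teeth p hp := Board.isChain_blue_mono hB (h.teeth p hp)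
  free := Board.isChain_blue_mono hB h.free

lemma singleton (hk : 0 < k) (x : ℕ) : Comb B k [] [x] where
  red := .nil
  teeth := by simp
  free := .singleton x
  nodup := by simp
  free_ne_nil := List.cons_ne_nil _ _
  length_lt := hk
  length_free := fun _ => rfl

lemma pathSystem (h : Comb B k Ls F) :
    PathSystem B (teethVertices Ls ++ F) (Ls.map Prod.fst) (F :: Ls.map Prod.snd) where
  red := h.red
  blue := List.forall_mem_cons.2
    ⟨h.free, List.forall_mem_map.2 fun p hp => (h.teeth p hp).tail⟩
  perm := by
    clear h
    induction Ls with
    | nil => simp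
    | cons p Ls ih => grind [teethVertices_cons]
  nodup := h.nodup

lemma exists_add_tooth (h : Comb B k Ls (x :: F)) (hk : Ls.length + 1 < k)
    (hx : ∀ q ∈ (Ls.map Prod.fst).head?, B.red.Adj x q) : ∃ z, Comb B k ((x, F) :: Ls) [z] := by
  obtain ⟨z, hz⟩ := Infinite.exists_notMem_finset (teethVertices Ls ++ (x :: F)).toFinset
  exact ⟨z,
    { red := h.red.cons hx
      teeth := List.forall_mem_cons.2 ⟨h.free, h.teeth⟩
      free := .singleton z
      nodup := (List.Perm.nodup_iff (by grind [teethVertices_cons])).1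
        (List.nodup_cons.2 ⟨mt List.mem_toFinset.2 hz, h.nodup⟩)
      free_ne_nil := List.cons_ne_nil _ _
      length_lt := hk
      length_free := fun _ => rfl }⟩

lemma remove_first_tooth (h : Comb B k ((q, L) :: Ls) (x :: F)) (hqx : B.blue.Adj q x) :
    Comb B k Ls ((q :: L).reverse ++ x :: F) where
  red := h.red.tail
  teeth p hp := h.teeth p (List.mem_cons_of_mem _ hp)
  free := isChain_adj_reverse_append (h.teeth _ List.mem_cons_self) h.free hqx
  nodup := (List.Perm.nodup_iff (by grind [teethVertices_cons])).1 h.nodup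
  free_ne_nil := by simp
  length_lt := by grind [h.length_lt]
  length_free := by grind [h.length_lt]

lemma remove_last_tooth (h : Comb B k (Ls ++ [(z, L)]) [x]) (hxz : B.blue.Adj x z) :
    Comb B k Ls (x :: z :: L) where
  red := (List.map_append ▸ h.red).left_of_append
  teeth p hp := h.teeth p (List.mem_append_left _ hp)
  free := (h.teeth (z, L) (by simp)).cons_cons hxz
  nodup := (List.Perm.nodup_iff
    (by grind [teethVertices_nil, teethVertices_cons, teethVertices_append])).1 h.nodup
  free_ne_nil := List.cons_ne_nil _ _
  length_lt := by grind [h.length_lt]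
  length_free := by grind [h.length_lt]

lemma forces_of_add_or_remove_tooth (h : Comb B k ((q, L) :: Ls) (x :: F))
    (hk : Ls.length + 2 < k)
    (hadd : ∀ B' z, Comb B' k ((x, F) :: (q, L) :: Ls) [z] → Forces W T B')
    (hremove : ∀ B', Comb B' k Ls ((q :: L).reverse ++ x :: F) → Forces W T B') :
    Forces W (T + 1) B := by
  have hnd := h.nodup
  refine .ask (x := x) (y := q) (by grind [teethVertices_cons]) (fun B' hB hxq => ?_)
    (fun B' hB hxq => hremove B' ((h.mono hB).remove_first_tooth hxq.symm))
  obtain ⟨z, hz⟩ := (h.mono hB).exists_add_tooth hk (by simpa using hxq)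
  exact hadd _ _ hz

-- If `xq` is red, then a red edge `xz` closes a `k`-cycle and a blue one lets `x` take over the
-- tooth at `z`.
lemma forces_of_rotate_or_remove_tooth (h : Comb B k ((q, L) :: (Ls ++ [(z, L')])) [x])
    (hLs : Ls.length + 3 = k)
    (hrotate : ∀ B' y, Comb B' k ((x, z :: L') :: (q, L) :: Ls) [y] → Forces (WinCP k n) T B')
    (hremove : ∀ B', Comb B' k (Ls ++ [(z, L')]) ((q :: L).reverse ++ [x]) →
      Forces (WinCP k n) (T + 1) B') :
    Forces (WinCP k n) (T + 2) B := by
  have hnd := h.nodup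
  refine .ask (x := x) (y := q) (by grind [teethVertices_cons]) (fun B₁ hB₁ hxq => ?_)
    (fun B' hB hxq => hremove B' ((h.mono hB).remove_first_tooth hxq.symm))
  refine .ask (x := x) (y := z) (by grind [teethVertices_cons, teethVertices_append])
    (fun B₂ hB₂ hxz => ?_) (fun B₂ hB₂ hxz => ?_)
  · have hred := (h.mono hB₁).red
    rw [List.map_cons, List.map_append] at hred
    have hxred : (x :: (q :: Ls.map Prod.fst ++ [z])).IsChain B₂.red.Adj :=
      Board.isChain_red_mono hB₂ (hred.cons_cons hxq)
    have hnd := h.pathSystem.nodup_append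
    exact .of_red_cycle hxred (by grind) hxz.symm (by simpa using hLs) (by omega)
  · have h' : Comb B₂ k ((q, L) :: Ls) (x :: z :: L') :=
      (h.mono (hB₁.trans hB₂)).remove_last_tooth hxz
    obtain ⟨y, hy⟩ := h'.exists_add_tooth (by grind) (by simpa using Board.red_mono hB₂ hxq)
    exact hrotate B₂ y hy

-- With `N` the number of vertices, `T + 2 * N - Ls.length` never decreases.
theorem forces (h : Comb B k Ls F) (hk : 4 ≤ k) (hke : Even k)
    (hN : (teethVertices Ls ++ F).length + 3 ≤ n + 2 * k)
    (hT : 2 * n + 11 * k + Ls.length + 2 ≤ T + 2 * (teethVertices Ls ++ F).length) :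
    Forces (WinCP k n) T B := by
  induction T using Nat.strong_induction_on generalizing B Ls F with | _ T ih => ?_
  have hLs := h.length_lt
  rcases hN.eq_or_lt with hN | hN
  · exact h.pathSystem.forces hk hke hN.ge (by simpa using hLs) (by omega) (by grind)
  obtain ⟨x, F, rfl⟩ := List.exists_cons_of_ne_nil h.free_ne_nil
  rcases Ls with _ | ⟨⟨q, L⟩, Ls⟩
  · obtain ⟨z, hz⟩ := h.exists_add_tooth (by grind) (by simp)
    refine (ih (T - 1) (by omega) hz ?_ ?_).mono (T.sub_le 1)
    all_goals grind [teethVertices_nil, teethVertices_cons]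
  rcases lt_or_ge (Ls.length + 2) k with hfull | hfull
  · obtain ⟨T, rfl⟩ := Nat.exists_eq_add_of_le' (show 1 ≤ T by omega)
    refine h.forces_of_add_or_remove_tooth hfull (fun B' z h' => ?_) (fun B' h' => ?_)
    all_goals refine ih T (by omega) h' ?_ ?_ <;> grind [teethVertices_cons]
  · obtain ⟨Ls, ⟨z, L'⟩, rfl⟩ := List.eq_nil_or_concat' Ls |>.resolve_left (by grind)
    obtain rfl : F = [] := by grind [h.length_free]
    obtain ⟨T, rfl⟩ := Nat.exists_eq_add_of_le' (show 2 ≤ T by omega)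
    simp only [teethVertices_cons, teethVertices_append] at hN hT
    refine h.forces_of_rotate_or_remove_tooth (by grind) (fun B' y h' => ?_)
      (fun B' h' => ?_)
    · refine ih T (by omega) h' ?_ ?_ <;> grind [teethVertices_cons, teethVertices_nil]
    · refine ih (T + 1) (by omega) h' ?_ ?_ <;> grind [teethVertices_cons, teethVertices_append]

end Comb

/-- For every even `k ≥ 4` and every `n`, `r̃(C_k, P_n) ≤ 2n + 11k`. -/
theorem online_ramsey_even_cycle_path (k n : ℕ) (hk : 4 ≤ k) (hke : Even k) :
    BuilderWinsIn emptyBoard (WinCP k n) (2 * n + 11 * k) := by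
  have hcomb : Comb emptyBoard k [] [0] := Comb.singleton (by omega) 0
  have hforces := hcomb.forces (n := n) (T := 2 * n + 11 * k) hk hke
    (by grind [teethVertices_nil]) (by grind [teethVertices_nil])
  exact hforces.builderWinsIn (by simp [emptyBoard, Board.colored])
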